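/- For fixed ρ > 0, as n → ∞ one has lim (σ_V²/n) = g_V(ρ), and moreover g_V(ρ) > 0. -/

import Mathlib

open MeasureTheory ProbabilityTheory Filter Set Metric
open scoped ENNReal NNReal BigOperators Topology Classical

noncomputable section

/-- Side length `n^(1/d)` of the cube `C_n` of volume `n` in dimension `d`. -/
def sideLen (d n : ℕ) : ℝ := (n : ℝ) ^ ((d : ℝ)⁻¹)

/-- The cube `C_n = [0, L)^d`. -/
def box (d : ℕ) (L : ℝ) : Set (Fin d → ℝ) := Set.univ.pi fun _ => Set.Ico (0 : ℝ) L

/-- The Euclidean toroidal distance on the cube `[0, L)^d`. -/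
def torDist {d : ℕ} (L : ℝ) (x y : Fin d → ℝ) : ℝ :=
  Real.sqrt (∑ i, (⨅ k : ℤ, |x i - y i - k * L|) ^ 2)

/-- The toroidal ball `B_r(x) = {y ∈ C_n : D(x,y) ≤ r}`. -/
def torBall {d : ℕ} (L : ℝ) (x : Fin d → ℝ) (r : ℝ) : Set (Fin d → ℝ) :=
  {y ∈ box d L | torDist L x y ≤ r}

/-- Addition (translation) in the torus `[0, L)^d`. -/
def torAdd {d : ℕ} (L : ℝ) (y x : Fin d → ℝ) : Fin d → ℝ :=
  fun i => L * Int.fract ((y i + x i) / L)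

/-- The uniform probability measure on the cube `[0, L)^d`. -/
def uniformBox (d : ℕ) (L : ℝ) : Measure (Fin d → ℝ) :=
  ((L.toNNReal ^ d)⁻¹ : ℝ≥0) • volume.restrict (box d L)

/-- The joint law of `n` independent points uniformly distributed on the cube `C_n`
of volume `n`; a point configuration is `ω : Fin n → (Fin d → ℝ)`, with `U_i = ω i`. -/
def binppLaw (d n : ℕ) : Measure (Fin n → Fin d → ℝ) :=
  Measure.pi fun _ => uniformBox d (sideLen d n)

/-- The total covered volume `V` of the union of toroidal balls of radius `ρ`
centered at the `n` points. -/
def coveredVol (d n : ℕ) (ρ : ℝ) (ω : Fin n → Fin d → ℝ) : ℝ :=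
  (volume (⋃ i, torBall (sideLen d n) (ω i) ρ)).toReal

/-- The number `S` of isolated points: indices `i` with `𝒰_n ∩ B_ρ(U_i) = {U_i}`. -/
def isolCount (d n : ℕ) (ρ : ℝ) (ω : Fin n → Fin d → ℝ) : ℝ :=
  ∑ i, if Set.range ω ∩ torBall (sideLen d n) (ω i) ρ = {ω i} then 1 else 0

/-- `π_d`: the volume of the unit ball in `ℝ^d`. -/
def unitBallVol (d : ℕ) : ℝ :=
  (volume (Metric.closedBall (0 : EuclideanSpace ℝ (Fin d)) 1)).toReal

/-- `φ = π_d ρ^d`. -/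
def phi (d : ℕ) (ρ : ℝ) : ℝ := unitBallVol d * ρ ^ d

/-- The standard normal cumulative distribution function. -/
def stdGaussCDF (t : ℝ) : ℝ := (gaussianReal 0 1 (Set.Iic t)).toReal

/-- The Kolmogorov distance `D_X` between the law of the standardized version of `X`
and the standard normal. -/
def kolDist {Ω : Type*} [MeasurableSpace Ω] (P : Measure Ω) (X : Ω → ℝ) : ℝ :=
  ⨆ t : ℝ,
    |(P {ω | (X ω - ∫ x, X x ∂P) / Real.sqrt (variance X P) ≤ t}).toReal - stdGaussCDF t|

/-- A fixed unit vector in `ℝ^d` (junk value `0` if `d = 0`). -/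
def unitVec (d : ℕ) : EuclideanSpace ℝ (Fin d) :=
  if h : 0 < d then EuclideanSpace.single (⟨0, h⟩ : Fin d) 1 else 0

/-- `ω_d(r)`: the volume of the union of two unit balls in `ℝ^d` whose centers are
at distance `r` apart. -/
def omegaVol (d : ℕ) (r : ℝ) : ℝ :=
  (volume (Metric.closedBall (0 : EuclideanSpace ℝ (Fin d)) 1 ∪
      Metric.closedBall (r • unitVec d) 1)).toReal

/-- The integral `J_{r,d}(ρ) = d π_d ∫_0^r exp(-ρ^d ω_d(t)) t^{d-1} dt`. -/
def Jint (r : ℝ) (d : ℕ) (ρ : ℝ) : ℝ :=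
  d * unitBallVol d * ∫ t in (0:ℝ)..r, Real.exp (-(ρ ^ d * omegaVol d t)) * t ^ (d - 1)

/-- The limiting variance density `g_V(ρ)`. -/
def gV (d : ℕ) (ρ : ℝ) : ℝ :=
  ρ ^ d * Jint 2 d ρ - (2 ^ d * phi d ρ + phi d ρ ^ 2) * Real.exp (-(2 * phi d ρ))

/-- The limiting variance density `g_S(ρ)`. -/
def gS (d : ℕ) (ρ : ℝ) : ℝ :=
  Real.exp (-phi d ρ) - (1 + (2 ^ d - 2) * phi d ρ + phi d ρ ^ 2) * Real.exp (-(2 * phi d ρ))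
    + ρ ^ d * (Jint 2 d ρ - Jint 1 d ρ)

/-- `κ_d`: the maximum number of closed unit balls in `ℝ^d` that can be packed so that
they all intersect a closed unit ball at the origin but are pairwise disjoint. -/
def kappa (d : ℕ) : ℕ :=
  sSup {k : ℕ | ∃ c : Fin k → EuclideanSpace ℝ (Fin d),
    (∀ i, (Metric.closedBall (c i) 1 ∩ Metric.closedBall 0 1).Nonempty) ∧
    Pairwise fun i j => Disjoint (Metric.closedBall (c i) 1) (Metric.closedBall (c j) 1)}

/-- `η_V(n, ρ)`. -/
def etaV (d n : ℕ) (ρ : ℝ) : ℝ :=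
  2 * phi d ρ ^ 2 * ((3 ^ d + 1) * phi d ρ + 1) ^ 2 *
      (1 + (2 ^ d + 1) * 6 ^ d * phi d ρ +
        ((2 * n - 6 ^ d * phi d ρ) / (n - 6 ^ d * phi d ρ)) * 6 ^ (2 * d) * phi d ρ ^ 2) +
    2 * phi d ρ ^ 4 *
      (3 * (4 ^ d + 2 ^ d) * phi d ρ +
        3 * 4 ^ d * phi d ρ ^ 2 * ((2 * n - 3 * 2 ^ d * phi d ρ) / (n - 3 * 2 ^ d * phi d ρ)) +
        4 + 2 / n)

/-- `η_S(n, ρ)`. -/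
def etaS (d n : ℕ) (ρ : ℝ) : ℝ :=
  2 * (1 + 2 * (kappa d : ℝ)) ^ 2 *
      (1 + (2 ^ d + 1) * 3 ^ d * phi d ρ +
        ((2 * n - 3 ^ d * phi d ρ) / (n - 3 ^ d * phi d ρ)) * 9 ^ d * phi d ρ ^ 2) +
    (((1 : ℝ) + kappa d) ^ 2 / 2) *
      ((2 ^ d + 2 * 3 ^ d + 3) * phi d ρ +
        (2 ^ (d + 1) + 1) *
          ((2 * n - (2 ^ (d + 1) + 1) * phi d ρ) / (n - (2 ^ (d + 1) + 1) * phi d ρ)) *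
          phi d ρ ^ 2 +
        (4 * n - 2) / (n - 1))

/-!
The covered volume has the same variance as the vacant one. By Fubini, the first two moments of the
latter are integrals of the probabilities that one point, or each of two points, is vacant, and
these probabilities are `n`-th powers because the random points are independent.
By translation invariance on the flat torus only the difference `w` of the two points matters, and
the two balls centered at them have a union of volume `2φ - γ w`, where `γ` is the covariogram of
the ball. Subtracting the vacancy probability `(1 - 2φ/n)^n` of two far apart points leaves an
integrand that is dominated by `γ`, so dominated convergence gives
`Var V / n → ∫ (e^(-(2φ - γ)) - e^(-2φ)) - φ² e^(-2φ)`, and integration in polar coordinates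
identifies this with `g_V`. Since `∫ γ = φ²`, the limit equals `e^(-2φ) ∫ (e^γ - 1 - γ)`, which is
positive.
-/

/-! ### Volumes of random sets -/

section RandomSet

variable {Ω X : Type*} [MeasurableSpace Ω] [MeasurableSpace X] {P : Measure Ω} {ν : Measure X}
  {S : Set (Ω × X)}

lemma integral_measureReal_prodMk_left [SFinite P] [SFinite ν] (hS : MeasurableSet S)
    (hν : ∀ ω, ν (Prod.mk ω ⁻¹' S) < ∞) (hP : ∀ x, P ((·, x) ⁻¹' S) < ∞) :
    ∫ ω, ν.real (Prod.mk ω ⁻¹' S) ∂P = ∫ x, P.real ((·, x) ⁻¹' S) ∂ν := by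
  simp_rw [measureReal_def]
  rw [integral_toReal (measurable_measure_prodMk_left hS).aemeasurable (.of_forall hν),
    integral_toReal (measurable_measure_prodMk_right hS).aemeasurable (.of_forall hP),
    ← Measure.prod_apply hS, ← Measure.prod_apply_symm hS]

lemma measurable_measureReal_prodMk_left [SFinite ν] (hS : MeasurableSet S) :
    Measurable fun ω => ν.real (Prod.mk ω ⁻¹' S) :=
  (measurable_measure_prodMk_left hS).ennreal_toReal

-- The square of the volume of a section is the volume of a section of a subset of `Ω × (X × X)`.
theorem variance_measureReal_prodMk_left [IsProbabilityMeasure P] [IsFiniteMeasure ν]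
    (hS : MeasurableSet S) :
    variance (fun ω => ν.real (Prod.mk ω ⁻¹' S)) P =
      ∫ z, P.real {ω | (ω, z.1) ∈ S ∧ (ω, z.2) ∈ S} ∂(ν.prod ν)
        - (∫ x, P.real {ω | (ω, x) ∈ S} ∂ν) ^ 2 := by
  let S₂ : Set (Ω × X × X) := {p | (p.1, p.2.1) ∈ S ∧ (p.1, p.2.2) ∈ S}
  have hS₂ : MeasurableSet S₂ :=
    ((by fun_prop : Measurable fun p : Ω × X × X => (p.1, p.2.1)) hS).inter
      ((by fun_prop : Measurable fun p : Ω × X × X => (p.1, p.2.2)) hS)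
  have hsq (ω : Ω) : ν.real (Prod.mk ω ⁻¹' S) ^ 2 = (ν.prod ν).real (Prod.mk ω ⁻¹' S₂) := by
    rw [sq, ← measureReal_prod_prod]
    rfl
  have hmem : MemLp (fun ω => ν.real (Prod.mk ω ⁻¹' S)) 2 P :=
    .of_bound (measurable_measureReal_prodMk_left hS).aestronglyMeasurable (ν.real univ)
      (.of_forall fun ω => by
        rw [Real.norm_of_nonneg measureReal_nonneg]
        exact measureReal_mono (subset_univ _))
  rw [variance_eq_sub hmem]
  simp only [Pi.pow_apply, hsq]
  rw [integral_measureReal_prodMk_left hS₂ (fun _ => measure_lt_top _ _)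
      (fun _ => measure_lt_top _ _),
    integral_measureReal_prodMk_left hS (fun _ => measure_lt_top _ _)
      (fun _ => measure_lt_top _ _)]
  rfl

end RandomSet

/-! ### Coverage by independent random sets -/

section Coverage

variable {ι E X : Type*} [MeasurableSpace E] [MeasurableSpace X] {μ : Measure E} {ν : Measure X}
  {A : Set (E × X)}

lemma measurable_measureReal_iUnion_prodMk_left [Countable ι] [SFinite ν]
    (hA : MeasurableSet A) : Measurable fun ω : ι → E => ν.real (⋃ i, Prod.mk (ω i) ⁻¹' A) := by
  have hU : MeasurableSet (⋃ i, {p : (ι → E) × X | (p.1 i, p.2) ∈ A}) :=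
    .iUnion fun i => (by fun_prop : Measurable fun p : (ι → E) × X => (p.1 i, p.2)) hA
  convert measurable_measureReal_prodMk_left (ν := ν) hU using 3
  ext
  simp

variable [Fintype ι]

lemma measureReal_pi_setOf_forall [SigmaFinite μ] (T : Set E) :
    (Measure.pi fun _ : ι => μ).real {ω | ∀ i, ω i ∈ T} = μ.real T ^ Fintype.card ι := by
  have hpi : {ω : ι → E | ∀ i, ω i ∈ T} = univ.pi fun _ => T := by
    ext
    simp
  simp [hpi, measureReal_def, Measure.pi_pi]

-- The vacant region has the same variance, and a point is vacant when each of the independent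
-- sets misses it, so that its vacancy probabilities are powers.
theorem variance_measureReal_iUnion_prodMk_left [IsProbabilityMeasure μ] [IsFiniteMeasure ν]
    (hA : MeasurableSet A) :
    variance (fun ω : ι → E => ν.real (⋃ i, Prod.mk (ω i) ⁻¹' A)) (Measure.pi fun _ => μ) =
      ∫ z, (1 - μ.real {u | (u, z.1) ∈ A ∨ (u, z.2) ∈ A}) ^ Fintype.card ι ∂(ν.prod ν)
        - (∫ x, (1 - μ.real {u | (u, x) ∈ A}) ^ Fintype.card ι ∂ν) ^ 2 := by
  let vacant : Set ((ι → E) × X) := {p | ∀ i, (p.1 i, p.2) ∈ Aᶜ}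
  have hvacant : MeasurableSet vacant := by
    rw [show vacant = ⋂ i, {p | (p.1 i, p.2) ∈ Aᶜ} by ext; simp [vacant]]
    exact .iInter fun i =>
      (by fun_prop : Measurable fun p : (ι → E) × X => (p.1 i, p.2)) hA.compl
  have hcompl (ω : ι → E) : ν.real (⋃ i, Prod.mk (ω i) ⁻¹' A) =
      ν.real univ - ν.real (Prod.mk ω ⁻¹' vacant) := by
    rw [← measureReal_compl (measurable_prodMk_left hvacant)]
    congr 1
    ext
    simp [vacant]
  have hone (x : X) : (Measure.pi fun _ : ι => μ).real {ω | (ω, x) ∈ vacant} =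
      (1 - μ.real {u | (u, x) ∈ A}) ^ Fintype.card ι := by
    have hcompl : μ.real {u | (u, x) ∈ Aᶜ} = 1 - μ.real {u | (u, x) ∈ A} :=
      probReal_compl_eq_one_sub (measurable_prodMk_right hA)
    rw [← hcompl, ← measureReal_pi_setOf_forall]
    rfl
  have htwo (z : X × X) :
      (Measure.pi fun _ : ι => μ).real {ω | (ω, z.1) ∈ vacant ∧ (ω, z.2) ∈ vacant} =
        (1 - μ.real {u | (u, z.1) ∈ A ∨ (u, z.2) ∈ A}) ^ Fintype.card ι := by
    have hcompl : μ.real {u | (u, z.1) ∈ A ∨ (u, z.2) ∈ A}ᶜ =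
        1 - μ.real {u | (u, z.1) ∈ A ∨ (u, z.2) ∈ A} :=
      probReal_compl_eq_one_sub ((measurable_prodMk_right hA).union (measurable_prodMk_right hA))
    rw [← hcompl, ← measureReal_pi_setOf_forall]
    congr 1
    ext
    simp [vacant, forall_and]
  simp_rw [hcompl]
  rw [variance_const_sub (measurable_measureReal_prodMk_left hvacant).aestronglyMeasurable,
    variance_measureReal_prodMk_left hvacant]
  simp_rw [hone, htwo]

end Coverage

/-! ### The covariogram of a set -/

section Covariogram

variable {G : Type*} [AddCommGroup G] [MeasurableSpace G] {μ : Measure G} {A : Set G}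

/-- The covariogram `w ↦ μ (A ∩ (A + w))` of `A`, the volume of the overlap of `A` with its
translate by `w`; the translate `A + w` is encoded as the preimage of `A` under `· - w`. -/
def covariogram (μ : Measure G) (A : Set G) (w : G) : ℝ := μ.real (A ∩ (· - w) ⁻¹' A)

lemma covariogram_nonneg (w : G) : 0 ≤ covariogram μ A w := measureReal_nonneg

lemma covariogram_le (hfin : μ A < ∞) (w : G) : covariogram μ A w ≤ μ.real A :=
  measureReal_mono inter_subset_left hfin.ne

@[simp]
lemma covariogram_zero : covariogram μ A 0 = μ.real A := by simp [covariogram]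

lemma covariogram_nnreal_smul (c : ℝ≥0) (w : G) :
    covariogram (c • μ) A w = c * covariogram μ A w := measureReal_nnreal_smul_apply c

variable [MeasurableAdd₂ G]

lemma measureReal_union_translate [μ.IsAddLeftInvariant] (hA : MeasurableSet A) (hfin : μ A < ∞)
    (w : G) :
    μ.real (A ∪ (· - w) ⁻¹' A) = 2 * μ.real A - covariogram μ A w := by
  have hpres := measurePreserving_sub_right μ w
  have htrans : μ ((· - w) ⁻¹' A) = μ A := hpres.measure_preimage hA.nullMeasurableSet
  have hsum := measureReal_union_add_inter (s := A) (hpres.measurable hA) hfin.ne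
    (htrans.trans_ne hfin.ne)
  rw [hpres.measureReal_preimage hA.nullMeasurableSet] at hsum
  rw [covariogram]
  linarith

variable [MeasurableNeg G]

lemma measurableSet_snd_mem_and_sub_mem (hA : MeasurableSet A) :
    MeasurableSet {p : G × G | p.2 ∈ A ∧ p.2 - p.1 ∈ A} :=
  (measurable_snd hA).inter ((measurable_snd.sub measurable_fst) hA)

lemma measurable_covariogram [SFinite μ] (hA : MeasurableSet A) : Measurable (covariogram μ A) :=
  measurable_measureReal_prodMk_left (measurableSet_snd_mem_and_sub_mem hA)

lemma measurable_measureReal_iUnion_translate {ι : Type*} [Countable ι] [SFinite μ]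
    (hA : MeasurableSet A) : Measurable fun ω : ι → G => μ.real (⋃ i, (· - ω i) ⁻¹' A) :=
  measurable_measureReal_iUnion_prodMk_left (A := {p : G × G | p.2 - p.1 ∈ A})
    ((measurable_snd.sub measurable_fst) hA)

lemma integral_prod_comp_sub {F : Type*} [NormedAddCommGroup F] [NormedSpace ℝ F] {ν : Measure G}
    [SFinite ν] [ν.IsAddLeftInvariant] {f : G → F} (hf : StronglyMeasurable f) :
    ∫ z, f (z.1 - z.2) ∂(ν.prod ν) = ν.real univ • ∫ w, f w ∂ν := by
  have hpres := measurePreserving_sub_prod ν ν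
  have hmap := integral_map hpres.aemeasurable (f := fun z : G × G => f z.1)
    (hf.comp_measurable measurable_fst).aestronglyMeasurable
  rw [← hmap, hpres.map_eq, integral_fun_fst]

variable [μ.IsAddLeftInvariant] [μ.IsNegInvariant]

lemma integral_covariogram [SFinite μ] (hA : MeasurableSet A) (hfin : μ A < ∞) :
    ∫ w, covariogram μ A w ∂μ = μ.real A ^ 2 := by
  let S : Set (G × G) := {p | p.2 ∈ A ∧ p.2 - p.1 ∈ A}
  have hsection (g : G) : ((·, g) ⁻¹' S) = if g ∈ A then (g - ·) ⁻¹' A else ∅ := by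
    split_ifs with hg <;> ext <;> simp [S, hg]
  have hpres (g : G) : MeasurePreserving (g - ·) μ μ := Measure.measurePreserving_sub_left μ g
  have hvol (g : G) : μ.real ((·, g) ⁻¹' S) = A.indicator (fun _ => μ.real A) g := by
    rw [hsection, indicator]
    split_ifs
    · exact (hpres g).measureReal_preimage hA.nullMeasurableSet
    · simp
  have hfinite (g : G) : μ ((·, g) ⁻¹' S) < ∞ := by
    rw [hsection]
    split_ifs
    · rwa [(hpres g).measure_preimage hA.nullMeasurableSet]
    · simp
  calc ∫ w, covariogram μ A w ∂μ
    _ = ∫ g, μ.real ((·, g) ⁻¹' S) ∂μ :=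
      integral_measureReal_prodMk_left (measurableSet_snd_mem_and_sub_mem hA)
        (fun _ => (measure_mono inter_subset_left).trans_lt hfin) hfinite
    _ = μ.real A ^ 2 := by
      simp_rw [hvol]
      rw [integral_indicator hA, setIntegral_const, smul_eq_mul, sq]

-- Were `covariogram μ A` not integrable, its integral `μ.real A ^ 2` would be the junk value `0`,
-- and the covariogram would vanish identically.
lemma integrable_covariogram [SFinite μ] (hA : MeasurableSet A) (hfin : μ A < ∞) :
    Integrable (covariogram μ A) μ := by
  by_contra hint
  have hzero : μ.real A = 0 := by
    simpa [integral_undef hint] using (integral_covariogram hA hfin).symm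
  refine hint ((integrable_zero G ℝ μ).congr (.of_forall fun w => ?_))
  exact le_antisymm (covariogram_nonneg w) ((covariogram_le hfin w).trans_eq hzero)

lemma measureReal_setOf_sub_mem_or_sub_mem (hA : MeasurableSet A) (hfin : μ A < ∞) (x y : G) :
    μ.real {u | x - u ∈ A ∨ y - u ∈ A} = 2 * μ.real A - covariogram μ A (x - y) := by
  have hpre : {u | x - u ∈ A ∨ y - u ∈ A} = (x - ·) ⁻¹' (A ∪ (· - (x - y)) ⁻¹' A) := by
    ext
    simp
  have hunion : MeasurableSet (A ∪ (· - (x - y)) ⁻¹' A) := hA.union (measurable_sub_const _ hA)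
  rw [hpre, (Measure.measurePreserving_sub_left μ x).measureReal_preimage hunion.nullMeasurableSet,
    measureReal_union_translate hA hfin]

-- Subtracting the vacancy probability of two far apart points localizes the integrand.
theorem variance_measureReal_iUnion_translate {ι : Type*} [Fintype ι] [IsProbabilityMeasure μ]
    {ν : Measure G} [IsFiniteMeasure ν] [ν.IsAddLeftInvariant] (hA : MeasurableSet A) :
    variance (fun ω : ι → G => ν.real (⋃ i, (· - ω i) ⁻¹' A)) (Measure.pi fun _ => μ) =
      ν.real univ * ∫ w, ((1 - (2 * μ.real A - covariogram μ A w)) ^ Fintype.card ι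
          - (1 - 2 * μ.real A) ^ Fintype.card ι) ∂ν
        + ν.real univ ^ 2 *
          ((1 - 2 * μ.real A) ^ Fintype.card ι - ((1 - μ.real A) ^ Fintype.card ι) ^ 2) := by
  have hone (x : G) : μ.real {u | x - u ∈ A} = μ.real A :=
    (Measure.measurePreserving_sub_left μ x).measureReal_preimage hA.nullMeasurableSet
  have hmeas : Measurable fun w => (1 - (2 * μ.real A - covariogram μ A w)) ^ Fintype.card ι := by
    have := measurable_covariogram (μ := μ) hA
    fun_prop
  have hint :
      Integrable (fun w => (1 - (2 * μ.real A - covariogram μ A w)) ^ Fintype.card ι) ν := by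
    refine .of_bound hmeas.aestronglyMeasurable 1 (.of_forall fun w => ?_)
    rw [norm_pow]
    refine pow_le_one₀ (norm_nonneg _) (abs_le.2 ?_)
    have hnonneg : 0 ≤ covariogram μ A w := covariogram_nonneg w
    have hle : covariogram μ A w ≤ μ.real A := covariogram_le (measure_lt_top _ _) w
    constructor <;> linarith [measureReal_le_one (μ := μ) (s := A)]
  refine (variance_measureReal_iUnion_prodMk_left (ν := ν) (A := {p : G × G | p.2 - p.1 ∈ A})
    ((measurable_snd.sub measurable_fst) hA)).trans ?_
  simp only [mem_ofPred_eq, hone, measureReal_setOf_sub_mem_or_sub_mem hA (measure_lt_top _ _)]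
  rw [integral_prod_comp_sub hmeas.stronglyMeasurable, integral_sub hint (integrable_const _)]
  simp only [integral_const, smul_eq_mul]
  ring

end Covariogram

/-! ### Limits of powers -/

section PowLimits

lemma exp_sub_one_le_mul_exp (x : ℝ) : Real.exp x - 1 ≤ x * Real.exp x := by
  have hmul := mul_le_mul_of_nonneg_left (Real.one_sub_le_exp_neg x) (Real.exp_pos x).le
  rw [← Real.exp_add, add_neg_cancel, Real.exp_zero] at hmul
  linarith

lemma tendsto_one_sub_div_pow_exp (a : ℝ) :
    Tendsto (fun n : ℕ => (1 - a / n) ^ n) atTop (𝓝 (Real.exp (-a))) := by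
  simpa [neg_div, ← sub_eq_add_neg] using Real.tendsto_one_add_div_pow_exp (-a)

lemma tendsto_mul_one_add_pow_sub_one {g : ℕ → ℝ} {c : ℝ}
    (hg : Tendsto (fun n : ℕ => (n : ℝ) ^ 2 * g n) atTop (𝓝 c)) :
    Tendsto (fun n : ℕ => n * ((1 + g n) ^ n - 1)) atTop (𝓝 c) := by
  have hmul : Tendsto (fun n : ℕ => n * g n) atTop (𝓝 0) := by
    rw [← mul_zero c]
    refine (hg.mul (tendsto_inv_atTop_nhds_zero_nat (𝕜 := ℝ))).congr fun n => ?_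
    rcases eq_or_ne (n : ℝ) 0 with hn | hn
    · simp [hn]
    · field_simp
  have hupper : Tendsto (fun n : ℕ => n ^ 2 * g n * Real.exp (n * g n)) atTop (𝓝 c) := by
    simpa using hg.mul ((Real.continuous_exp.tendsto 0).comp hmul)
  have hbound : ∀ᶠ n : ℕ in atTop, -1 ≤ g n := by
    filter_upwards [hmul.eventually_const_le neg_one_lt_zero, eventually_ge_atTop 1] with n hn hn1
    have : (1 : ℝ) ≤ n := by exact_mod_cast hn1
    by_contra! hlt
    nlinarith
  refine tendsto_of_tendsto_of_tendsto_of_le_of_le' hg hupper ?_ ?_ <;>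
    filter_upwards [hbound] with n hn
  · have hbernoulli := one_add_mul_le_pow (by linarith : -2 ≤ g n) n
    calc (n : ℝ) ^ 2 * g n = n * (n * g n) := by ring
      _ ≤ n * ((1 + g n) ^ n - 1) := by gcongr; linarith
  · have hpow : (1 + g n) ^ n ≤ Real.exp (n * g n) := by
      rw [Real.exp_nat_mul]
      exact pow_le_pow_left₀ (by linarith) (by linarith [Real.add_one_le_exp (g n)]) n
    calc n * ((1 + g n) ^ n - 1) ≤ n * (n * g n * Real.exp (n * g n)) := by
          gcongr
          exact (sub_le_sub_right hpow 1).trans (exp_sub_one_le_mul_exp _)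
      _ = n ^ 2 * g n * Real.exp (n * g n) := by ring

-- `1 - 2 * a / n = (1 - a / n) ^ 2 * (1 - (a / (n - a)) ^ 2)`
lemma tendsto_mul_one_sub_two_mul_div_pow_sub_sq (a : ℝ) :
    Tendsto (fun n : ℕ => n * ((1 - 2 * a / n) ^ n - ((1 - a / n) ^ n) ^ 2)) atTop
      (𝓝 (-(a ^ 2 * Real.exp (-(2 * a))))) := by
  have hratio : Tendsto (fun n : ℕ => (n : ℝ) / (n - a)) atTop (𝓝 1) := by
    simpa [← sub_eq_add_neg] using tendsto_natCast_div_add_atTop (-a)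
  have hg : Tendsto (fun n : ℕ => (n : ℝ) ^ 2 * -(a / (n - a)) ^ 2) atTop (𝓝 (-a ^ 2)) := by
    have hsq := ((hratio.pow 2).const_mul (a ^ 2)).neg
    rw [one_pow, mul_one] at hsq
    exact hsq.congr fun n => by ring
  have hlim := ((tendsto_one_sub_div_pow_exp a).pow 2).mul (tendsto_mul_one_add_pow_sub_one hg)
  have hvalue : Real.exp (-a) ^ 2 * -a ^ 2 = -(a ^ 2 * Real.exp (-(2 * a))) := by
    rw [← Real.exp_nat_mul]
    push_cast
    ring_nf
  rw [← hvalue]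
  refine hlim.congr' ?_
  filter_upwards [eventually_gt_atTop 0,
    tendsto_natCast_atTop_atTop.eventually_gt_atTop a] with n hn hna
  have hn' : (n : ℝ) ≠ 0 := by positivity
  have hna' : (n : ℝ) - a ≠ 0 := (sub_pos.2 hna).ne'
  have hfactor : (1 - a / n) ^ 2 * (1 + -(a / (n - a)) ^ 2) = 1 - 2 * a / n := by
    field_simp
    ring
  rw [← hfactor, mul_pow, ← pow_mul, ← pow_mul, mul_comm n 2]
  ring

end PowLimits

/-! ### The limiting variance density -/

section VarianceDensity

variable {G : Type*} [AddCommGroup G] [MeasurableSpace G] {μ : Measure G} {A : Set G}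

/-- The limiting variance per unit volume of the volume covered by `n` independent uniform
translates of `A` in a space of volume `n`, as `n → ∞`. -/
def varianceDensity (μ : Measure G) (A : Set G) : ℝ :=
  Real.exp (-(2 * μ.real A)) * ∫ w, (Real.exp (covariogram μ A w) - 1 - covariogram μ A w) ∂μ

variable [MeasurableAdd₂ G] [MeasurableNeg G] [μ.IsAddLeftInvariant] [μ.IsNegInvariant] [SFinite μ]

lemma integrable_exp_covariogram_sub_one (hA : MeasurableSet A) (hfin : μ A < ∞) :
    Integrable (fun w => Real.exp (covariogram μ A w) - 1) μ := by
  have hmeas := measurable_covariogram (μ := μ) hA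
  refine ((integrable_covariogram hA hfin).mul_const (Real.exp (μ.real A))).mono'
    (by fun_prop) (.of_forall fun w => ?_)
  rw [Real.norm_of_nonneg (sub_nonneg.2 (Real.one_le_exp (covariogram_nonneg w)))]
  refine (exp_sub_one_le_mul_exp _).trans ?_
  gcongr
  exacts [covariogram_nonneg w, covariogram_le hfin w]

lemma varianceDensity_eq_integral_sub_sq (hA : MeasurableSet A) (hfin : μ A < ∞) :
    varianceDensity μ A =
      ∫ w, (Real.exp (-(2 * μ.real A - covariogram μ A w)) - Real.exp (-(2 * μ.real A))) ∂μ
        - μ.real A ^ 2 * Real.exp (-(2 * μ.real A)) := by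
  have hfactor (w : G) :
      Real.exp (-(2 * μ.real A - covariogram μ A w)) - Real.exp (-(2 * μ.real A)) =
        Real.exp (-(2 * μ.real A)) * (Real.exp (covariogram μ A w) - 1) := by
    rw [mul_sub, ← Real.exp_add, mul_one]
    ring_nf
  simp_rw [hfactor]
  rw [varianceDensity, integral_sub (integrable_exp_covariogram_sub_one hA hfin)
    (integrable_covariogram hA hfin), integral_covariogram hA hfin, integral_const_mul]
  ring

-- `exp x - 1 - x` is positive wherever `x ≠ 0`, and `covariogram μ A` is not almost everywhere
-- zero because its integral is `μ.real A ^ 2`.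
theorem varianceDensity_pos (hA : MeasurableSet A) (hpos : 0 < μ A) (hfin : μ A < ∞) :
    0 < varianceDensity μ A := by
  have hint := integrable_covariogram hA hfin
  have hpos' : 0 < μ.real A := ENNReal.toReal_pos hpos.ne' hfin.ne
  have hsupp : Function.support (fun w => Real.exp (covariogram μ A w) - 1 - covariogram μ A w) =
      Function.support (covariogram μ A) := by
    ext w
    rcases eq_or_ne (covariogram μ A w) 0 with hw | hw
    · simp [hw]
    · simpa [hw] using (by linarith [Real.add_one_lt_exp hw] :
        0 < Real.exp (covariogram μ A w) - 1 - covariogram μ A w).ne'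
  refine mul_pos (Real.exp_pos _) ?_
  rw [integral_pos_iff_support_of_nonneg
    (fun w => sub_nonneg.2 (by linarith [Real.add_one_le_exp (covariogram μ A w)]))
    ((integrable_exp_covariogram_sub_one hA hfin).sub hint), hsupp,
    ← integral_pos_iff_support_of_nonneg covariogram_nonneg hint, integral_covariogram hA hfin]
  positivity

lemma tendsto_integral_one_sub_div_pow_sub (hA : MeasurableSet A) (hfin : μ A < ∞) :
    Tendsto (fun n : ℕ => ∫ w, ((1 - (2 * μ.real A - covariogram μ A w) / n) ^ n
      - (1 - 2 * μ.real A / n) ^ n) ∂μ) atTop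
      (𝓝 (∫ w, (Real.exp (-(2 * μ.real A - covariogram μ A w))
        - Real.exp (-(2 * μ.real A))) ∂μ)) := by
  have hmeas := measurable_covariogram (μ := μ) hA
  refine tendsto_integral_filter_of_dominated_convergence (covariogram μ A)
    (.of_forall fun n => by fun_prop) ?_ (integrable_covariogram hA hfin)
    (.of_forall fun w => (tendsto_one_sub_div_pow_exp _).sub (tendsto_one_sub_div_pow_exp _))
  filter_upwards [eventually_gt_atTop 0,
    tendsto_natCast_atTop_atTop.eventually_ge_atTop (2 * μ.real A)] with n hn hlarge
  refine .of_forall fun w => ?_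
  have hn' : (0 : ℝ) < n := by exact_mod_cast hn
  have hm : 0 ≤ μ.real A := measureReal_nonneg
  have hγ : 0 ≤ covariogram μ A w := covariogram_nonneg w
  have hγ' : covariogram μ A w ≤ μ.real A := covariogram_le hfin w
  have hunit {t : ℝ} (h0 : 0 ≤ t) (hn : t ≤ n) : |1 - t / n| ≤ 1 := by
    rw [abs_le]
    constructor <;> linarith [div_nonneg h0 hn'.le, (div_le_one hn').2 hn]
  calc |(1 - (2 * μ.real A - covariogram μ A w) / n) ^ n - (1 - 2 * μ.real A / n) ^ n|
    _ ≤ |(1 - (2 * μ.real A - covariogram μ A w) / n) - (1 - 2 * μ.real A / n)| * n *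
        max |1 - (2 * μ.real A - covariogram μ A w) / n| |1 - 2 * μ.real A / n| ^ (n - 1) :=
      abs_pow_sub_pow_le ..
    _ ≤ |(1 - (2 * μ.real A - covariogram μ A w) / n) - (1 - 2 * μ.real A / n)| * n * 1 := by
      gcongr
      exact pow_le_one₀ (by positivity)
        (max_le (hunit (by linarith) (by linarith)) (hunit (by linarith) hlarge))
    _ = |covariogram μ A w / n| * n := by ring_nf
    _ = covariogram μ A w := by
      rw [abs_of_nonneg (div_nonneg hγ hn'.le), div_mul_cancel₀ _ hn'.ne']

theorem tendsto_varianceDensity (hA : MeasurableSet A) (hfin : μ A < ∞) :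
    Tendsto (fun n : ℕ => ∫ w, ((1 - (2 * μ.real A - covariogram μ A w) / n) ^ n
        - (1 - 2 * μ.real A / n) ^ n) ∂μ
      + n * ((1 - 2 * μ.real A / n) ^ n - ((1 - μ.real A / n) ^ n) ^ 2)) atTop
      (𝓝 (varianceDensity μ A)) := by
  rw [varianceDensity_eq_integral_sub_sq hA hfin, sub_eq_add_neg]
  exact (tendsto_integral_one_sub_div_pow_sub hA hfin).add
    (tendsto_mul_one_sub_two_mul_div_pow_sub_sq _)

end VarianceDensity

/-! ### Euclidean balls -/

section Ball

open scoped Pointwise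

section Seminormed

variable {E : Type*} [SeminormedAddCommGroup E]

lemma preimage_sub_right_closedBall_zero (w : E) (r : ℝ) :
    (· - w) ⁻¹' closedBall 0 r = closedBall w r := by
  ext
  rw [mem_preimage, mem_closedBall_zero_iff, mem_closedBall, dist_eq_norm]

lemma covariogram_closedBall_eq_zero [MeasurableSpace E] {μ : Measure E} {r : ℝ} {w : E}
    (hw : 2 * r < ‖w‖) : covariogram μ (closedBall 0 r) w = 0 := by
  have hdisj : Disjoint (closedBall 0 r) (closedBall w r) :=
    closedBall_disjoint_closedBall (by rwa [dist_zero_left, ← two_mul])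
  rw [covariogram, preimage_sub_right_closedBall_zero, hdisj.inter_eq, measureReal_empty]

end Seminormed

lemma setIntegral_closedBall_fun_norm_addHaar {E F : Type*} [NormedAddCommGroup E]
    [NormedSpace ℝ E] [FiniteDimensional ℝ E] [Nontrivial E] [MeasurableSpace E] [BorelSpace E]
    [NormedAddCommGroup F] [NormedSpace ℝ F] (μ : Measure E) [μ.IsAddHaarMeasure] (f : ℝ → F)
    {r : ℝ} (hr : 0 ≤ r) :
    ∫ x in closedBall 0 r, f ‖x‖ ∂μ = Module.finrank ℝ E • μ.real (ball 0 1) •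
      ∫ t in 0..r, t ^ (Module.finrank ℝ E - 1) • f t := by
  have hindicator (x : E) :
      (closedBall 0 r).indicator (fun x => f ‖x‖) x = (Iic r).indicator f ‖x‖ := by
    simp [indicator]
  have hradial : ∫ t in Ioi (0 : ℝ), t ^ (Module.finrank ℝ E - 1) • (Iic r).indicator f t =
      ∫ t in 0..r, t ^ (Module.finrank ℝ E - 1) • f t := by
    have hsmul (t : ℝ) : t ^ (Module.finrank ℝ E - 1) • (Iic r).indicator f t =
        (Iic r).indicator (fun t => t ^ (Module.finrank ℝ E - 1) • f t) t := by
      by_cases ht : t ∈ Iic r <;> simp [ht]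
    simp_rw [hsmul]
    rw [setIntegral_indicator measurableSet_Iic, Ioi_inter_Iic,
      intervalIntegral.integral_of_le hr]
  rw [← integral_indicator isClosed_closedBall.measurableSet]
  simp_rw [hindicator]
  rw [integral_fun_norm_addHaar, hradial]

lemma volumeReal_closedBall_zero_union_closedBall_of_norm_eq {E : Type*} [NormedAddCommGroup E]
    [InnerProductSpace ℝ E] [FiniteDimensional ℝ E] [MeasurableSpace E] [BorelSpace E] {v w : E}
    (h : ‖v‖ = ‖w‖) (r : ℝ) :
    volume.real (closedBall 0 r ∪ closedBall v r) =
      volume.real (closedBall 0 r ∪ closedBall w r) := by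
  let R := (Submodule.span ℝ {v - w})ᗮ.reflection
  have hR : R v = w := Submodule.reflection_sub h
  have hpre : R ⁻¹' (closedBall 0 r ∪ closedBall w r) = closedBall 0 r ∪ closedBall v r := by
    rw [preimage_union, R.preimage_closedBall, R.preimage_closedBall, map_zero, ← hR,
      R.symm_apply_apply]
  rw [← hpre, R.measurePreserving.measureReal_preimage
    (isClosed_closedBall.union isClosed_closedBall).measurableSet.nullMeasurableSet]

variable {d : ℕ} {ρ : ℝ}

local notation "𝔼" => EuclideanSpace ℝ (Fin d)

lemma volumeReal_closedBall_eq_phi (hρ : 0 ≤ ρ) (w : 𝔼) :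
    volume.real (closedBall w ρ) = phi d ρ := by
  rw [Measure.addHaar_real_closedBall' _ _ hρ, finrank_euclideanSpace_fin, mul_comm]
  rfl

lemma omegaVol_norm (hd : 1 ≤ d) (z : 𝔼) :
    omegaVol d ‖z‖ = volume.real (closedBall 0 1 ∪ closedBall z 1) := by
  have hunit : ‖unitVec d‖ = 1 := by
    rw [unitVec, dif_pos (by lia)]
    simp
  exact volumeReal_closedBall_zero_union_closedBall_of_norm_eq (by simp [norm_smul, hunit]) 1

lemma pow_mul_omegaVol_norm (hd : 1 ≤ d) (hρ : 0 < ρ) (z : 𝔼) :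
    ρ ^ d * omegaVol d ‖z‖ =
      2 * phi d ρ - covariogram volume (closedBall (0 : 𝔼) ρ) (ρ • z) := by
  have hscale : closedBall 0 ρ ∪ closedBall (ρ • z) ρ =
      ρ • (closedBall 0 1 ∪ closedBall z 1) := by
    simp [smul_set_union, smul_closedBall' hρ.ne', abs_of_pos hρ]
  rw [← volumeReal_closedBall_eq_phi hρ.le (0 : 𝔼),
    ← measureReal_union_translate isClosed_closedBall.measurableSet measure_closedBall_lt_top,
    preimage_sub_right_closedBall_zero, hscale, omegaVol_norm hd, measureReal_def,
    measureReal_def, Measure.addHaar_smul, ENNReal.toReal_mul, finrank_euclideanSpace_fin,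
    abs_of_pos (by positivity), ENNReal.toReal_ofReal (by positivity)]

lemma pow_mul_Jint_two (hd : 1 ≤ d) (hρ : 0 < ρ) :
    ρ ^ d * Jint 2 d ρ = ∫ w in closedBall (0 : 𝔼) (2 * ρ),
      Real.exp (-(2 * phi d ρ - covariogram volume (closedBall (0 : 𝔼) ρ) w)) := by
  have : Nonempty (Fin d) := ⟨⟨0, hd⟩⟩
  have hball : ρ • closedBall (0 : 𝔼) 2 = closedBall 0 (2 * ρ) := by
    simp [smul_closedBall' hρ.ne', abs_of_pos hρ, mul_comm]
  have hunit : volume.real (ball (0 : 𝔼) 1) = unitBallVol d :=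
    (Measure.addHaar_real_closedBall_eq_addHaar_real_ball volume 0 1).symm
  have hpolar : Jint 2 d ρ =
      ∫ z in closedBall (0 : 𝔼) 2, Real.exp (-(ρ ^ d * omegaVol d ‖z‖)) := by
    rw [setIntegral_closedBall_fun_norm_addHaar volume
      (fun t => Real.exp (-(ρ ^ d * omegaVol d t))) zero_le_two, hunit, finrank_euclideanSpace_fin,
      Jint]
    simp only [nsmul_eq_mul, smul_eq_mul, mul_assoc, mul_comm (Real.exp _)]
  rw [hpolar]
  simp_rw [pow_mul_omegaVol_norm hd hρ]
  rw [Measure.setIntegral_comp_smul_of_pos volume (fun w =>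
      Real.exp (-(2 * phi d ρ - covariogram volume (closedBall (0 : 𝔼) ρ) w))) _ hρ,
    hball, finrank_euclideanSpace_fin, smul_eq_mul, mul_inv_cancel_left₀ (by positivity)]

theorem gV_eq_varianceDensity (hd : 1 ≤ d) (hρ : 0 < ρ) :
    gV d ρ = varianceDensity volume (closedBall (0 : 𝔼) ρ) := by
  let γ := covariogram volume (closedBall (0 : 𝔼) ρ)
  have hmeas : MeasurableSet (closedBall (0 : 𝔼) ρ) := isClosed_closedBall.measurableSet
  have hfin : volume (closedBall (0 : 𝔼) ρ) < ∞ := measure_closedBall_lt_top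
  have hφ : volume.real (closedBall (0 : 𝔼) ρ) = phi d ρ := volumeReal_closedBall_eq_phi hρ.le 0
  have hφ₂ : volume.real (closedBall (0 : 𝔼) (2 * ρ)) = 2 ^ d * phi d ρ := by
    rw [volumeReal_closedBall_eq_phi (by positivity), phi, phi, mul_pow]
    ring
  have hγ (w : 𝔼) : γ w ≤ phi d ρ := (covariogram_le hfin w).trans_eq hφ
  have hint : IntegrableOn (fun w => Real.exp (-(2 * phi d ρ - γ w))) (closedBall 0 (2 * ρ)) := by
    have hγmeas : Measurable γ := measurable_covariogram hmeas
    refine Measure.integrableOn_of_bounded (M := 1) measure_closedBall_lt_top.ne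
      (by fun_prop) (.of_forall fun w => ?_)
    rw [Real.norm_of_nonneg (Real.exp_pos _).le, Real.exp_le_one_iff]
    linarith [hγ w, hφ ▸ measureReal_nonneg (μ := volume) (s := closedBall (0 : 𝔼) ρ)]
  have hoff (w : 𝔼) (hw : w ∉ closedBall 0 (2 * ρ)) :
      Real.exp (-(2 * phi d ρ - γ w)) - Real.exp (-(2 * phi d ρ)) = 0 := by
    have hzero : γ w = 0 := covariogram_closedBall_eq_zero (by simpa using hw)
    simp [hzero]
  have hsplit : ∫ w, (Real.exp (-(2 * phi d ρ - γ w)) - Real.exp (-(2 * phi d ρ))) =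
      ρ ^ d * Jint 2 d ρ - 2 ^ d * phi d ρ * Real.exp (-(2 * phi d ρ)) := by
    rw [← setIntegral_eq_integral_of_forall_compl_eq_zero hoff, pow_mul_Jint_two hd hρ,
      integral_sub hint (integrableOn_const measure_closedBall_lt_top.ne), setIntegral_const,
      hφ₂, smul_eq_mul]
  rw [varianceDensity_eq_integral_sub_sq hmeas hfin, hφ, hsplit, gV]
  ring

end Ball

/-! ### The flat torus -/

section Torus

variable {d : ℕ} {L ρ : ℝ}

local notation "𝔼" => EuclideanSpace ℝ (Fin d)

/-- The projection of `ℝ^d` onto the torus `(ℝ / Lℤ)^d`, which identifies the latter with the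
cube `box d L`. -/
def toTorus (L : ℝ) (x : Fin d → ℝ) : Fin d → AddCircle L := fun i => x i

/-- The ball of radius `ρ` around `0` in the torus, for the Euclidean toroidal distance. -/
def torusBall (d : ℕ) (L ρ : ℝ) : Set (Fin d → AddCircle L) := {g | ‖WithLp.toLp 2 g‖ ≤ ρ}

/-- The half-open cube of side length `L` centered at `0`, a fundamental domain of the torus that
contains every Euclidean ball around `0` of radius less than `L / 2`. -/
def centeredBox (d : ℕ) (L : ℝ) : Set (EuclideanSpace ℝ (Fin d)) :=
  WithLp.ofLp ⁻¹' univ.pi fun _ => Ioc (-(L / 2)) (-(L / 2) + L)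

@[simp] lemma toTorus_zero : toTorus L (0 : Fin d → ℝ) = 0 := rfl

lemma toTorus_sub (x y : Fin d → ℝ) : toTorus L (x - y) = toTorus L x - toTorus L y := rfl

lemma measurableSet_torusBall : MeasurableSet (torusBall d L ρ) :=
  (isClosed_le (PiLp.continuous_toLp 2 _).norm continuous_const).measurableSet

lemma measurableSet_centeredBox : MeasurableSet (centeredBox d L) :=
  (PiLp.volume_preserving_ofLp (Fin d)).measurable (.univ_pi fun _ => measurableSet_Ioc)

lemma abs_apply_le_of_mem_centeredBox {z : 𝔼} (hz : z ∈ centeredBox d L) (i : Fin d) :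
    |z i| ≤ L / 2 := by
  have hi := hz i (mem_univ i)
  exact abs_le.2 ⟨hi.1.le, by linarith [hi.2]⟩

lemma mem_centeredBox_of_norm_lt {z : 𝔼} (hz : ‖z‖ < L / 2) : z ∈ centeredBox d L := fun i _ => by
  have hi := abs_lt.1 ((PiLp.norm_apply_le z i).trans_lt hz)
  exact ⟨hi.1, by linarith [hi.2]⟩

section Distance

lemma iInf_abs_sub_int_mul (a : ℝ) : ⨅ k : ℤ, |a - k * L| = ‖(a : AddCircle L)‖ := by
  apply le_antisymm
  · rw [AddCircle.norm_eq]
    exact ciInf_le ⟨0, forall_mem_range.2 fun _ => abs_nonneg _⟩ _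
  · refine le_ciInf fun k => ?_
    have hperiod : (a : AddCircle L) = ((a - k * L : ℝ) : AddCircle L) := by
      rw [← zsmul_eq_mul, AddCircle.coe_sub, AddCircle.coe_zsmul, AddCircle.coe_period]
      simp
    rw [hperiod]
    exact QuotientAddGroup.norm_mk_le_norm

lemma torDist_eq_norm (x y : Fin d → ℝ) :
    torDist L x y = ‖WithLp.toLp 2 (toTorus L y - toTorus L x)‖ := by
  have hcoord (i : Fin d) :
      ⨅ k : ℤ, |x i - y i - k * L| = ‖(toTorus L y - toTorus L x) i‖ := by
    rw [iInf_abs_sub_int_mul, AddCircle.coe_sub, norm_sub_rev]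
    rfl
  simp_rw [torDist, PiLp.norm_eq_of_L2, hcoord]

lemma torBall_eq_inter_preimage (x : Fin d → ℝ) :
    torBall L x ρ = toTorus L ⁻¹' ((· - toTorus L x) ⁻¹' torusBall d L ρ) ∩ box d L := by
  ext y
  rw [torBall, mem_ofPred_eq, torDist_eq_norm, and_comm]
  rfl

variable [hL : Fact (0 < L)]

lemma norm_toLp_toTorus {z : 𝔼} (hz : ∀ i, |z i| ≤ L / 2) :
    ‖WithLp.toLp 2 (toTorus L z.ofLp)‖ = ‖z‖ := by
  have hcoord (i : Fin d) : ‖(z i : AddCircle L)‖ = |z i| :=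
    (AddCircle.norm_coe_eq_abs_iff L hL.out.ne').2 (by rw [abs_of_pos hL.out]; exact hz i)
  simp [PiLp.norm_eq_of_L2, toTorus, hcoord]

lemma toTorus_mem_torusBall_iff {z : 𝔼} (hz : ∀ i, |z i| ≤ L / 2) :
    toTorus L z.ofLp ∈ torusBall d L ρ ↔ z ∈ closedBall 0 ρ := by
  rw [torusBall, mem_ofPred_eq, norm_toLp_toTorus hz, mem_closedBall_zero_iff]

-- No wrapping around: overlapping balls have centers at distance at most `2 * ρ`, so all the
-- points involved have norm less than `L / 2`.
lemma preimage_toTorus_inter_centeredBox (hρL : 6 * ρ < L) {w : 𝔼} (hw : w ∈ centeredBox d L) :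
    (fun z : 𝔼 => toTorus L z.ofLp) ⁻¹'
        (torusBall d L ρ ∩ (· - toTorus L w.ofLp) ⁻¹' torusBall d L ρ) ∩ centeredBox d L =
      closedBall 0 ρ ∩ (· - w) ⁻¹' closedBall 0 ρ := by
  have hhalf {z : 𝔼} (hz : ‖z‖ ≤ 3 * ρ) (i : Fin d) : |z i| ≤ L / 2 := by
    linarith [(PiLp.norm_apply_le z i).trans hz, Real.norm_eq_abs (z i)]
  ext z
  simp only [mem_inter_iff, mem_preimage, ← toTorus_sub, ← WithLp.ofLp_sub]
  constructor
  · rintro ⟨⟨hz, hzw⟩, hzbox⟩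
    have hz' := (toTorus_mem_torusBall_iff (abs_apply_le_of_mem_centeredBox hzbox)).1 hz
    have hnorm : ‖w‖ ≤ 2 * ρ := calc
      ‖w‖ = ‖WithLp.toLp 2 (toTorus L z.ofLp) - WithLp.toLp 2 (toTorus L (z - w).ofLp)‖ := by
        rw [← norm_toLp_toTorus (abs_apply_le_of_mem_centeredBox hw), ← WithLp.toLp_sub,
          ← toTorus_sub, ← WithLp.ofLp_sub, sub_sub_cancel]
      _ ≤ ρ + ρ := (norm_sub_le _ _).trans (add_le_add hz hzw)
      _ = 2 * ρ := (two_mul ρ).symm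
    refine ⟨hz', (toTorus_mem_torusBall_iff (hhalf ?_)).1 hzw⟩
    linarith [norm_sub_le z w, mem_closedBall_zero_iff.1 hz']
  · rintro ⟨hz, hzw⟩
    have hz' := mem_closedBall_zero_iff.1 hz
    have hzw' := mem_closedBall_zero_iff.1 hzw
    have hρ : 0 ≤ ρ := (norm_nonneg z).trans hz'
    exact ⟨⟨(toTorus_mem_torusBall_iff (hhalf (by linarith))).2 hz,
      (toTorus_mem_torusBall_iff (hhalf (by linarith))).2 hzw⟩,
      mem_centeredBox_of_norm_lt (by linarith [hL.out])⟩

end Distance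

section Measure

variable [hL : Fact (0 < L)]

lemma measurePreserving_toTorus_univ_pi_Ioc (a : ℝ) :
    MeasurePreserving (toTorus L)
      (volume.restrict (univ.pi fun _ : Fin d => Ioc a (a + L))) volume := by
  rw [volume_pi, Measure.restrict_pi_pi, volume_pi]
  exact measurePreserving_pi _ _ fun _ => AddCircle.measurePreserving_mk L a

lemma measurePreserving_toTorus_box :
    MeasurePreserving (toTorus L) (volume.restrict (box d L)) volume := by
  have hae : box d L =ᵐ[volume] univ.pi fun _ : Fin d => Ioc 0 (0 + L) := by
    rw [zero_add]
    exact Measure.univ_pi_Ico_ae_eq_Icc.trans Measure.univ_pi_Ioc_ae_eq_Icc.symm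
  rw [Measure.restrict_congr_set hae]
  exact measurePreserving_toTorus_univ_pi_Ioc 0

lemma measurePreserving_toTorus_centeredBox :
    MeasurePreserving (fun z : 𝔼 => toTorus L z.ofLp) (volume.restrict (centeredBox d L))
      volume :=
  (measurePreserving_toTorus_univ_pi_Ioc _).comp
    ((PiLp.volume_preserving_ofLp (Fin d)).restrict_preimage
      (.univ_pi fun _ => measurableSet_Ioc))

lemma volumeReal_torus_univ : volume.real (univ : Set (Fin d → AddCircle L)) = L ^ d := by
  simp [measureReal_def, volume_pi, Measure.pi_univ, AddCircle.measure_univ,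
    ENNReal.toReal_ofReal hL.out.le]

lemma volumeReal_iUnion_torBall {ι : Type*} [Countable ι] (x : ι → Fin d → ℝ) :
    volume.real (⋃ i, torBall L (x i) ρ) =
      volume.real (⋃ i, (· - toTorus L (x i)) ⁻¹' torusBall d L ρ) := by
  have hmeas : MeasurableSet (⋃ i, (· - toTorus L (x i)) ⁻¹' torusBall d L ρ) :=
    .iUnion fun i => measurable_sub_const _ measurableSet_torusBall
  rw [← measurePreserving_toTorus_box.measureReal_preimage hmeas.nullMeasurableSet,
    measureReal_restrict_apply (measurePreserving_toTorus_box.measurable hmeas),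
    preimage_iUnion, iUnion_inter]
  simp_rw [torBall_eq_inter_preimage]

lemma covariogram_torusBall (hρL : 6 * ρ < L) {w : 𝔼} (hw : w ∈ centeredBox d L) :
    covariogram volume (torusBall d L ρ) (toTorus L w.ofLp) =
      covariogram volume (closedBall 0 ρ) w := by
  have hmeas : MeasurableSet (torusBall d L ρ ∩ (· - toTorus L w.ofLp) ⁻¹' torusBall d L ρ) :=
    measurableSet_torusBall.inter (measurable_sub_const _ measurableSet_torusBall)
  rw [covariogram, ← measurePreserving_toTorus_centeredBox.measureReal_preimage
    hmeas.nullMeasurableSet,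
    measureReal_restrict_apply (measurePreserving_toTorus_centeredBox.measurable hmeas),
    preimage_toTorus_inter_centeredBox hρL hw, covariogram]

lemma volumeReal_torusBall (hρ : 0 ≤ ρ) (hρL : 6 * ρ < L) :
    volume.real (torusBall d L ρ) = phi d ρ := by
  have hzero : (0 : 𝔼) ∈ centeredBox d L :=
    mem_centeredBox_of_norm_lt (by simpa using hL.out)
  have hcov := covariogram_torusBall hρL hzero
  rwa [WithLp.ofLp_zero, toTorus_zero, covariogram_zero, covariogram_zero,
    volumeReal_closedBall_eq_phi hρ] at hcov

instance : (volume : Measure (Fin d → AddCircle L)).IsNegInvariant := Measure.pi.isNegInvariant _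

lemma integral_comp_covariogram_torusBall (hρL : 6 * ρ < L) {f : ℝ → ℝ} (hf : Measurable f)
    (hf₀ : f 0 = 0) :
    ∫ g, f (covariogram volume (torusBall d L ρ) g) =
      ∫ w, f (covariogram volume (closedBall (0 : 𝔼) ρ) w) := by
  have hpres := measurePreserving_toTorus_centeredBox (d := d) (L := L)
  have hoff (w : 𝔼) (hw : w ∉ centeredBox d L) :
      f (covariogram volume (closedBall (0 : 𝔼) ρ) w) = 0 := by
    have hnorm : L / 2 ≤ ‖w‖ := not_lt.1 (mt mem_centeredBox_of_norm_lt hw)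
    rw [covariogram_closedBall_eq_zero (by linarith [hL.out]), hf₀]
  have hmeas : Measurable fun g => f (covariogram volume (torusBall d L ρ) g) :=
    hf.comp (measurable_covariogram measurableSet_torusBall)
  have hmap := integral_map hpres.aemeasurable hmeas.aestronglyMeasurable
  rw [hpres.map_eq] at hmap
  calc ∫ g, f (covariogram volume (torusBall d L ρ) g)
    _ = ∫ w in centeredBox d L, f (covariogram volume (torusBall d L ρ) (toTorus L w.ofLp)) :=
      hmap
    _ = ∫ w in centeredBox d L, f (covariogram volume (closedBall (0 : 𝔼) ρ) w) :=
      setIntegral_congr_fun measurableSet_centeredBox fun w hw => by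
        rw [covariogram_torusBall hρL hw]
    _ = ∫ w, f (covariogram volume (closedBall (0 : 𝔼) ρ) w) :=
      setIntegral_eq_integral_of_forall_compl_eq_zero hoff

end Measure

section Uniform

variable [hL : Fact (0 < L)]

/-- The uniform probability measure on the torus, the image of `uniformBox d L`. -/
def uniformTorus (d : ℕ) (L : ℝ) [Fact (0 < L)] : Measure (Fin d → AddCircle L) :=
  ((L.toNNReal ^ d)⁻¹ : ℝ≥0) • volume

instance : IsProbabilityMeasure (uniformTorus d L) := by
  rw [isProbabilityMeasure_iff_real, uniformTorus, measureReal_nnreal_smul_apply,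
    volumeReal_torus_univ, NNReal.coe_inv, NNReal.coe_pow, Real.coe_toNNReal _ hL.out.le]
  exact inv_mul_cancel₀ (pow_ne_zero _ hL.out.ne')

instance : (uniformTorus d L).IsAddLeftInvariant := by
  unfold uniformTorus
  infer_instance

instance : (uniformTorus d L).IsNegInvariant where
  neg_eq_self := by
    rw [Measure.neg, uniformTorus, Measure.map_smul]
    congr 1
    exact Measure.neg_eq_self _

lemma measurePreserving_toTorus_uniformBox :
    MeasurePreserving (toTorus L) (uniformBox d L) (uniformTorus d L) :=
  measurePreserving_toTorus_box.smul_measure _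

lemma variance_volumeReal_iUnion_torBall {ι : Type*} [Fintype ι] :
    variance (fun ω : ι → Fin d → ℝ => volume.real (⋃ i, torBall L (ω i) ρ))
        (Measure.pi fun _ => uniformBox d L) =
      variance (fun ω : ι → Fin d → AddCircle L =>
        volume.real (⋃ i, (· - ω i) ⁻¹' torusBall d L ρ))
        (Measure.pi fun _ => uniformTorus d L) := by
  have hpres : MeasurePreserving (fun (ω : ι → Fin d → ℝ) i => toTorus L (ω i))
      (Measure.pi fun _ => uniformBox d L) (Measure.pi fun _ => uniformTorus d L) :=
    measurePreserving_pi _ _ fun _ => measurePreserving_toTorus_uniformBox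
  have hmeas : Measurable fun ω : ι → Fin d → AddCircle L =>
      volume.real (⋃ i, (· - ω i) ⁻¹' torusBall d L ρ) :=
    measurable_measureReal_iUnion_translate measurableSet_torusBall
  rw [← hpres.variance_fun_comp hmeas.aemeasurable]
  congr 1
  ext ω
  exact volumeReal_iUnion_torBall ω

end Uniform

lemma sideLen_pow (hd : 1 ≤ d) (n : ℕ) : sideLen d n ^ d = n :=
  Real.rpow_inv_natCast_pow n.cast_nonneg (by lia)

lemma tendsto_sideLen_atTop (hd : 1 ≤ d) : Tendsto (sideLen d) atTop atTop :=
  (tendsto_rpow_atTop (by positivity)).comp tendsto_natCast_atTop_atTop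

theorem variance_coveredVol_div (hd : 1 ≤ d) (hρ : 0 ≤ ρ) {n : ℕ} (hn : 6 * ρ < sideLen d n) :
    variance (coveredVol d n ρ) (binppLaw d n) / n =
      (∫ w : 𝔼, ((1 - (2 * volume.real (closedBall (0 : 𝔼) ρ)
            - covariogram volume (closedBall (0 : 𝔼) ρ) w) / n) ^ n
          - (1 - 2 * volume.real (closedBall (0 : 𝔼) ρ) / n) ^ n))
        + n * ((1 - 2 * volume.real (closedBall (0 : 𝔼) ρ) / n) ^ n
          - ((1 - volume.real (closedBall (0 : 𝔼) ρ) / n) ^ n) ^ 2) := by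
  have hL : Fact (0 < sideLen d n) := ⟨by linarith⟩
  have hn₀ : (n : ℝ) ≠ 0 := sideLen_pow hd n ▸ pow_ne_zero _ hL.out.ne'
  have hscale : (((sideLen d n).toNNReal ^ d)⁻¹ : ℝ≥0) = (n : ℝ)⁻¹ := by
    rw [NNReal.coe_inv, NNReal.coe_pow, Real.coe_toNNReal _ hL.out.le, sideLen_pow hd]
  have hφ : (uniformTorus d (sideLen d n)).real (torusBall d _ ρ) =
      volume.real (closedBall (0 : 𝔼) ρ) / n := by
    rw [uniformTorus, measureReal_nnreal_smul_apply, hscale, volumeReal_torusBall hρ hn,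
      volumeReal_closedBall_eq_phi hρ, inv_mul_eq_div]
  have hγ (g : Fin d → AddCircle (sideLen d n)) :
      covariogram (uniformTorus d (sideLen d n)) (torusBall d _ ρ) g =
        covariogram volume (torusBall d _ ρ) g / n := by
    rw [uniformTorus, covariogram_nnreal_smul, hscale, inv_mul_eq_div]
  have hvar : variance (coveredVol d n ρ) (binppLaw d n) =
      variance (fun ω : Fin n → Fin d → AddCircle (sideLen d n) =>
        volume.real (⋃ i, (· - ω i) ⁻¹' torusBall d _ ρ))
        (Measure.pi fun _ => uniformTorus d _) :=
    variance_volumeReal_iUnion_torBall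
  rw [hvar, variance_measureReal_iUnion_translate measurableSet_torusBall, volumeReal_torus_univ,
    sideLen_pow hd, Fintype.card_fin]
  simp_rw [hφ, hγ, ← mul_div_assoc, ← sub_div]
  rw [integral_comp_covariogram_torusBall hn (f := fun t =>
    (1 - (2 * volume.real (closedBall (0 : 𝔼) ρ) - t) / n) ^ n
      - (1 - 2 * volume.real (closedBall (0 : 𝔼) ρ) / n) ^ n) (by fun_prop) (by simp)]
  field_simp

end Torus

/-- (3.2) of Theorem 2.3: the normalized variance of the covered volume `V`
converges to `g_V(ρ)`, which is strictly positive. -/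
theorem variance_coveredVol_limit (d : ℕ) (hd : 1 ≤ d) (ρ : ℝ) (hρ : 0 < ρ) :
    Tendsto (fun n : ℕ => variance (coveredVol d n ρ) (binppLaw d n) / n) atTop
        (nhds (gV d ρ)) ∧
      0 < gV d ρ := by
  have hmeas : MeasurableSet (closedBall (0 : EuclideanSpace ℝ (Fin d)) ρ) :=
    isClosed_closedBall.measurableSet
  rw [gV_eq_varianceDensity hd hρ]
  refine ⟨(tendsto_varianceDensity hmeas measure_closedBall_lt_top).congr' ?_,
    varianceDensity_pos hmeas (measure_closedBall_pos _ _ hρ) measure_closedBall_lt_top⟩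
  filter_upwards [(tendsto_sideLen_atTop hd).eventually_gt_atTop (6 * ρ)] with n hn
  exact (variance_coveredVol_div hd hρ.le hn).symm

end
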